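/- Let A be a finite alphabet with |A| ≥ 2. The diagonal action of G* on the product ∏_{a∈A} Ω^a is minimal: every G*-orbit is dense in ∏_{a∈A} Ω^a. -/

import Mathlib

/-!
An automorphism preserving every `φ(Ω^b)` lies in `G*` and needs no recentring by `ℓ`, so it
suffices to correct finitely many coordinates `(a, n)` of a tuple `(y_a)` in `∏_a φ(Ω^a)` by such
automorphisms. This is done one coordinate at a time. To turn the symbol of `y_a` at `n` into `c`,
exchange `y_a n` and `c` wherever the rest of the window of radius `T` looks as it does around `n`
in `y_a`.

If no two such occurrences are within distance `T` of each other, an exchange never touches the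
context of another one, so the exchange is an involution. For large `T` this holds: the window
contains a long block of `a`s followed by a symbol other than `a`, and an overlap would force `y_a`
to be constantly `a` on a long interval after `n` and then to leave `a` again. For `b ≠ a`, an
occurrence in a point of `φ(Ω^b)` needs a symbol `a` at distance `T` to its left, so it lies beyond
any prescribed coordinate.
-/

open Filter MeasureTheory

/-- The group of self-homeomorphisms of a topological space,
with `(f * g) x = f (g x)`. -/
instance homeoGroup (X : Type*) [TopologicalSpace X] : Group (X ≃ₜ X) where
  mul f g := g.trans f
  one := Homeomorph.refl X
  inv := Homeomorph.symm
  mul_assoc f g h := Homeomorph.ext fun _ => rfl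
  one_mul f := Homeomorph.ext fun _ => rfl
  mul_one f := Homeomorph.ext fun _ => rfl
  inv_mul_cancel f := Homeomorph.ext f.symm_apply_apply

/-- The left shift `(σ x) m = x (m+1)` on `A^ℤ`, as a homeomorphism. -/
def shiftHomeo (A : Type*) [TopologicalSpace A] : (ℤ → A) ≃ₜ (ℤ → A) where
  toFun x := fun m => x (m + 1)
  invFun x := fun m => x (m - 1)
  left_inv x := funext fun m => by simp
  right_inv x := funext fun m => by simp
  continuous_toFun := continuous_pi fun m => continuous_apply (m + 1)
  continuous_invFun := continuous_pi fun m => continuous_apply (m - 1)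

/-- `Aut(A^ℤ)`: the group of homeomorphisms of `A^ℤ` commuting with the shift. -/
def ShiftAut (A : Type*) [TopologicalSpace A] : Subgroup ((ℤ → A) ≃ₜ (ℤ → A)) :=
  Subgroup.centralizer {shiftHomeo A}

/-- `Ω`: the space of one-sided configurations whose zeroth symbol differs from
the first. -/
def OmegaSet (A : Type*) : Set (ℕ → A) := {x | x 0 ≠ x 1}

/-- `Ω^a`: the elements of `Ω` whose zeroth symbol is `a`. -/
def OmegaA (A : Type*) (a : A) : Set (ℕ → A) := {x | x 0 = a ∧ x 0 ≠ x 1}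

/-- `φ : Ω → A^ℤ_*` prepends an infinite constant `x 0` prefix to `x`. -/
def phiMap (A : Type*) (x : ℕ → A) : ℤ → A :=
  fun m => if m ≤ 0 then x 0 else x m.toNat

/-- `ℓ(y)`: the last coordinate of the constant prefix of `y ∈ A^ℤ_*`. -/
noncomputable def ellVal (A : Type*) (y : ℤ → A) : ℤ :=
  sInf {m : ℤ | y m ≠ y (m + 1)}

/-- The action of `Aut(A^ℤ)` on `Ω`: `g • x = ψ (g (φ x))`, where
`ψ(y) = φ⁻¹(σ^{ℓ(y)} y)`, i.e. `(g • x) n = (g (φ x)) (ℓ (g (φ x)) + n)`. -/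
noncomputable def omegaAct (A : Type*) [TopologicalSpace A]
    (g : (ℤ → A) ≃ₜ (ℤ → A)) (x : ℕ → A) : ℕ → A :=
  fun n => g (phiMap A x) (ellVal A (g (phiMap A x)) + n)

/-- `G* = ∩_{a ∈ A} G^a`, where `G^a` is the set of automorphisms that
preserve `Ω^a` under the action on `Ω`. -/
def Gstar (A : Type*) [TopologicalSpace A] : Set ((ℤ → A) ≃ₜ (ℤ → A)) :=
  {g | g ∈ ShiftAut A ∧ ∀ a : A, omegaAct A g '' OmegaA A a = OmegaA A a}

/-- The product `∏_{a ∈ A} Ω^a`. -/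
abbrev ProdOmega (A : Type*) : Type _ := {z : A → ℕ → A // ∀ a : A, z a ∈ OmegaA A a}

/-- The diagonal action of `G*` on `∏_{a ∈ A} Ω^a`. -/
noncomputable def diagAct (A : Type*) [TopologicalSpace A]
    (g : (ℤ → A) ≃ₜ (ℤ → A)) (hg : g ∈ Gstar A) (z : ProdOmega A) : ProdOmega A :=
  ⟨fun a => omegaAct A g (z.1 a), fun a => by
    have h := hg.2 a
    rw [← h]
    exact Set.mem_image_of_mem _ (z.2 a)⟩

/-! ### Marker swaps -/

/-- Two configurations that may differ only at the coordinate `pos`. Their windows around `pos` are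
the two patterns exchanged by a marker automorphism. -/
structure Marker (A : Type*) where
  left : ℤ → A
  right : ℤ → A
  pos : ℤ
  eq_of_ne : ∀ k ≠ pos, left k = right k

/-- `y` looks around `m` like `x` around `n`, up to distance `T`. -/
def WindowEq {A : Type*} (T : ℤ) (y : ℤ → A) (m : ℤ) (x : ℤ → A) (n : ℤ) : Prop :=
  ∀ k ∈ Set.Icc (-T) T, y (m + k) = x (n + k)

namespace Marker

variable {A : Type*} {μ : Marker A} {T m : ℤ} {y : ℤ → A}

/-- One of the two patterns of radius `T` occurs in `y`, centred at `m`. -/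
def OccursAt (μ : Marker A) (T : ℤ) (y : ℤ → A) (m : ℤ) : Prop :=
  WindowEq T y m μ.left μ.pos ∨ WindowEq T y m μ.right μ.pos

/-- Distinct occurrences of the patterns of radius `T` are at distance more than `T`. -/
def Isolated (μ : Marker A) (T : ℤ) : Prop :=
  ∀ ⦃y : ℤ → A⦄ ⦃m n : ℤ⦄, μ.OccursAt T y m → μ.OccursAt T y n → |n - m| ≤ T → n = m

open Classical in
/-- The exchange of the two patterns at all occurrences. Only the central symbol changes. -/
noncomputable def swap (μ : Marker A) (T : ℤ) (y : ℤ → A) : ℤ → A := fun m =>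
  if μ.OccursAt T y m then Equiv.swap (μ.left μ.pos) (μ.right μ.pos) (y m) else y m

open Classical in
theorem swap_of_occursAt (h : μ.OccursAt T y m) :
    μ.swap T y m = Equiv.swap (μ.left μ.pos) (μ.right μ.pos) (y m) :=
  if_pos h

theorem swap_of_not_occursAt (h : ¬ μ.OccursAt T y m) : μ.swap T y m = y m :=
  if_neg h

theorem Isolated.swap_eq_of_occursAt (hμ : μ.Isolated T) (h : μ.OccursAt T y m) {n : ℤ}
    (hnm : n ≠ m) (hT : |n - m| ≤ T) : μ.swap T y n = y n :=
  swap_of_not_occursAt fun hn => hnm (hμ h hn hT)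

theorem Isolated.occursAt_swap (hμ : μ.Isolated T) (h : μ.OccursAt T y m) :
    μ.OccursAt T (μ.swap T y) m := by
  classical
  have exchange : ∀ x x' : ℤ → A, (∀ k ≠ μ.pos, x k = x' k) →
      Equiv.swap (μ.left μ.pos) (μ.right μ.pos) (x μ.pos) = x' μ.pos →
      WindowEq T y m x μ.pos → WindowEq T (μ.swap T y) m x' μ.pos := by
    intro x x' h_off h_pos hyx k hk
    obtain rfl | hk0 := eq_or_ne k 0
    · rw [add_zero, add_zero, swap_of_occursAt h, ← h_pos, ← add_zero m, hyx 0 hk, add_zero]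
    · rw [hμ.swap_eq_of_occursAt h (by simpa using hk0) (by simpa using abs_le.2 hk), hyx k hk,
        h_off _ (by simpa using hk0)]
  exact h.symm.imp
    (exchange _ _ (fun k hk => (μ.eq_of_ne k hk).symm) (Equiv.swap_apply_right _ _))
    (exchange _ _ μ.eq_of_ne (Equiv.swap_apply_left _ _))

theorem Isolated.occursAt_swap_iff (hμ : μ.Isolated T) :
    μ.OccursAt T (μ.swap T y) m ↔ μ.OccursAt T y m := by
  refine ⟨fun h => ?_, hμ.occursAt_swap⟩
  by_contra hm
  have window_unchanged : ∀ k ∈ Set.Icc (-T) T, μ.swap T y (m + k) = y (m + k) := fun k hk =>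
    swap_of_not_occursAt fun hk' => by
      have hkm := hμ h (hμ.occursAt_swap hk') (by simpa using abs_le.2 hk)
      exact hm (hkm ▸ hk')
  exact hm (h.imp (fun hl k hk => (window_unchanged k hk).symm.trans (hl k hk))
    fun hr k hk => (window_unchanged k hk).symm.trans (hr k hk))

theorem Isolated.involutive_swap (hμ : μ.Isolated T) : Function.Involutive (μ.swap T) := by
  classical
  intro y
  funext m
  by_cases h : μ.OccursAt T y m
  · rw [swap_of_occursAt (hμ.occursAt_swap h), swap_of_occursAt h, Equiv.swap_apply_self]
  · rw [swap_of_not_occursAt (hμ.occursAt_swap_iff.not.2 h), swap_of_not_occursAt h]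

section Topology

variable [TopologicalSpace A]

theorem shiftHomeo_apply (y : ℤ → A) (m : ℤ) : shiftHomeo A y m = y (m + 1) :=
  rfl

theorem occursAt_shiftHomeo :
    μ.OccursAt T (shiftHomeo A y) m ↔ μ.OccursAt T y (m + 1) := by
  simp only [OccursAt, WindowEq, shiftHomeo_apply, add_right_comm]

theorem swap_shiftHomeo (μ : Marker A) (T : ℤ) (y : ℤ → A) :
    μ.swap T (shiftHomeo A y) = shiftHomeo A (μ.swap T y) := by
  classical
  exact funext fun _ => if_congr occursAt_shiftHomeo rfl rfl

variable [DiscreteTopology A]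

theorem isClopen_setOf_windowEq (T m : ℤ) (x : ℤ → A) (n : ℤ) :
    IsClopen {y | WindowEq T y m x n} := by
  simp only [WindowEq, Set.ofPred_forall]
  exact (Set.finite_Icc (-T) T).isClopen_biInter fun k _ =>
    (isClopen_discrete {x (n + k)}).preimage (continuous_apply (m + k))

theorem continuous_swap (μ : Marker A) (T : ℤ) : Continuous (μ.swap T) := by
  classical
  refine continuous_pi fun m => ?_
  have hclopen : IsClopen {y | μ.OccursAt T y m} :=
    (isClopen_setOf_windowEq T m μ.left μ.pos).union (isClopen_setOf_windowEq T m μ.right μ.pos)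
  refine Continuous.if (fun y hy => ?_)
    (continuous_of_discreteTopology.comp (continuous_apply m)) (continuous_apply m)
  simp [hclopen.frontier_eq] at hy

/-- The marker automorphism exchanging the two patterns of radius `T`. -/
noncomputable def swapHomeo (μ : Marker A) {T : ℤ} (hμ : μ.Isolated T) : (ℤ → A) ≃ₜ (ℤ → A) where
  toEquiv := hμ.involutive_swap.toPerm
  continuous_toFun := μ.continuous_swap T
  continuous_invFun := μ.continuous_swap T

@[simp]
theorem swapHomeo_apply (hμ : μ.Isolated T) (y : ℤ → A) : μ.swapHomeo hμ y = μ.swap T y :=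
  rfl

theorem swapHomeo_mem_shiftAut (hμ : μ.Isolated T) : μ.swapHomeo hμ ∈ ShiftAut A := by
  refine Subgroup.mem_centralizer_iff.2 ?_
  rintro _ rfl
  exact Homeomorph.ext fun y => (μ.swap_shiftHomeo T y).symm

end Topology

end Marker

/-! ### Anchored configurations -/

/-- The set `φ(Ω^b)`, described as the configurations whose constant prefix consists of the symbol
`b` and ends exactly at the coordinate `0`; the bijection with `Ω^b` is `phiMap`, with inverse the
restriction to `ℕ` (`phiMap_restrict`). -/
def anchored {A : Type*} (b : A) : Set (ℤ → A) :=
  {y | (∀ m ≤ 0, y m = b) ∧ y 1 ≠ b}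

section Anchored

variable {A : Type*} {b : A}

theorem phiMap_natCast (x : ℕ → A) (n : ℕ) : phiMap A x n = x n := by
  obtain rfl | hn := Nat.eq_zero_or_pos n
  · simp [phiMap]
  · simp [phiMap, hn.ne']

theorem phiMap_mem_anchored {x : ℕ → A} (hx : x ∈ OmegaA A b) : phiMap A x ∈ anchored b :=
  ⟨fun _ hm => (if_pos hm).trans hx.1, by simpa [phiMap, ← hx.1] using hx.2.symm⟩

theorem restrict_mem_OmegaA {y : ℤ → A} (hy : y ∈ anchored b) :
    (fun n : ℕ => y n) ∈ OmegaA A b :=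
  ⟨hy.1 0 le_rfl, by simpa [hy.1 0 le_rfl] using hy.2.symm⟩

theorem phiMap_restrict {y : ℤ → A} (hy : y ∈ anchored b) : phiMap A (fun n : ℕ => y n) = y := by
  funext m
  obtain hm | hm := le_or_gt m 0
  · simp [phiMap, hm, hy.1]
  · simp [phiMap, hm.not_ge, hm.le]

theorem ellVal_eq_zero {y : ℤ → A} (hy : y ∈ anchored b) : ellVal A y = 0 := by
  have hleast : IsLeast {m : ℤ | y m ≠ y (m + 1)} 0 := by
    refine ⟨by simpa [hy.1] using hy.2.symm, fun m hm => ?_⟩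
    by_contra! hneg
    exact hm ((hy.1 m hneg.le).trans (hy.1 (m + 1) hneg).symm)
  exact hleast.csInf_eq

/-- The automorphisms preserving each `φ(Ω^b)`. -/
def anchoredStabilizer (A : Type*) [TopologicalSpace A] : Subgroup ((ℤ → A) ≃ₜ (ℤ → A)) where
  carrier := {g | g ∈ ShiftAut A ∧ ∀ b y, g y ∈ anchored b ↔ y ∈ anchored b}
  one_mem' := ⟨one_mem _, fun _ _ => Iff.rfl⟩
  mul_mem' hg hh := ⟨mul_mem hg.1 hh.1, fun b y => (hg.2 b _).trans (hh.2 b y)⟩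
  inv_mem' {g} hg := ⟨inv_mem hg.1, fun b y => by
    rw [← hg.2 b (g⁻¹ y)]
    exact iff_of_eq (congrArg (· ∈ anchored b) (g.apply_symm_apply y))⟩

variable [TopologicalSpace A]

theorem omegaAct_eq_restrict {g : (ℤ → A) ≃ₜ (ℤ → A)} {x : ℕ → A}
    (hgx : g (phiMap A x) ∈ anchored b) : omegaAct A g x = fun n : ℕ => g (phiMap A x) n := by
  funext n
  rw [omegaAct, ellVal_eq_zero hgx, zero_add]

theorem anchoredStabilizer_subset_Gstar : (anchoredStabilizer A : Set _) ⊆ Gstar A := by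
  refine fun g hg => ⟨hg.1, fun b => Set.Subset.antisymm ?_ fun x hx => ?_⟩
  · rintro _ ⟨x, hx, rfl⟩
    have hgx : g (phiMap A x) ∈ anchored b := (hg.2 b _).2 (phiMap_mem_anchored hx)
    rw [omegaAct_eq_restrict hgx]
    exact restrict_mem_OmegaA hgx
  · have hgy : g (g.symm (phiMap A x)) = phiMap A x := g.apply_symm_apply _
    have hy : g.symm (phiMap A x) ∈ anchored b :=
      (hg.2 b _).1 (hgy.symm ▸ phiMap_mem_anchored hx)
    refine ⟨_, restrict_mem_OmegaA hy, ?_⟩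
    rw [omegaAct_eq_restrict (b := b) (by
      rw [phiMap_restrict hy, hgy]; exact phiMap_mem_anchored hx), phiMap_restrict hy, hgy]
    exact funext (phiMap_natCast x)

end Anchored

/-! ### Markers in anchored configurations -/

namespace Marker

variable {A : Type*} {μ : Marker A} {a b : A} {T m : ℤ} {y : ℤ → A}

/-- Both patterns are windows of points of `φ(Ω^a)`, centred to the right of the prefix `a^∞`. -/
structure IsAnchored (μ : Marker A) (a : A) : Prop where
  left_mem : μ.left ∈ anchored a
  right_mem : μ.right ∈ anchored a
  pos_pos : 0 < μ.pos

theorem IsAnchored.exists_windowEq (hμ : μ.IsAnchored a) (h : μ.OccursAt T y m) :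
    ∃ x ∈ anchored a, (∀ k ≠ μ.pos, x k = μ.left k) ∧ WindowEq T y m x μ.pos := by
  rcases h with h | h
  · exact ⟨μ.left, hμ.left_mem, fun _ _ => rfl, h⟩
  · exact ⟨μ.right, hμ.right_mem, fun k hk => (μ.eq_of_ne k hk).symm, h⟩

theorem IsAnchored.eq_of_occursAt (hμ : μ.IsAnchored a) (h : μ.OccursAt T y m) {j : ℤ}
    (hTj : m - T ≤ j) (hj : j ≤ m - μ.pos) : y j = a := by
  obtain ⟨x, hx, -, hyx⟩ := hμ.exists_windowEq h
  have hpos := hμ.pos_pos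
  have hj' := hyx (j - m) ⟨by lia, by lia⟩
  rw [add_sub_cancel] at hj'
  exact hj'.trans (hx.1 _ (by lia))

theorem IsAnchored.ne_of_occursAt (hμ : μ.IsAnchored a) (hT : μ.pos ≤ T) (h : μ.OccursAt T y m) :
    y (m - μ.pos + 1) ≠ a := by
  obtain ⟨x, hx, -, hyx⟩ := hμ.exists_windowEq h
  have hpos := hμ.pos_pos
  have hj := hyx (1 - μ.pos) ⟨by lia, by lia⟩
  rw [add_sub_cancel, show m + (1 - μ.pos) = m - μ.pos + 1 by ring] at hj
  exact hj ▸ hx.2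

theorem IsAnchored.pos_le_of_occursAt (hμ : μ.IsAnchored a) (hT : μ.pos ≤ T) (hy : y ∈ anchored b)
    (h : μ.OccursAt T y m) : μ.pos ≤ m := by
  by_contra! hm
  have ha : y (m - μ.pos) = a := hμ.eq_of_occursAt h (by lia) le_rfl
  have hne : y (m - μ.pos + 1) ≠ a := hμ.ne_of_occursAt hT h
  rw [hy.1 _ (by lia)] at ha hne
  exact hne ha

theorem IsAnchored.eq_of_occursAt_anchored (hμ : μ.IsAnchored a) (hT : μ.pos ≤ T)
    (hy : y ∈ anchored b) (h : μ.OccursAt T y m) (hm : m ≤ T) : b = a := by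
  rw [← hy.1 (m - T) (by lia)]
  exact hμ.eq_of_occursAt h le_rfl (by lia)

theorem IsAnchored.swap_mem_anchored (hμ : μ.IsAnchored a) (hT : μ.pos ≤ T) (hiso : μ.Isolated T)
    (hy : y ∈ anchored b) : μ.swap T y ∈ anchored b := by
  have hpos := hμ.pos_pos
  refine ⟨fun m hm => ?_, ?_⟩
  · rw [swap_of_not_occursAt fun h => ?_, hy.1 m hm]
    have := hμ.pos_le_of_occursAt hT hy h
    lia
  · by_cases h : μ.OccursAt T y 1
    · have hpos1 : μ.pos = 1 := by
        have := hμ.pos_le_of_occursAt hT hy h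
        lia
      rw [hμ.eq_of_occursAt_anchored hT hy h (by lia)]
      simpa [hpos1] using hμ.ne_of_occursAt hT (hiso.occursAt_swap h)
    · rw [swap_of_not_occursAt h]
      exact hy.2

/-- The occurrence at `m + k` begins with a long block of `a`s followed by another symbol; the
occurrence at `m` contains all but the first few of these `a`s to the right of its centre. -/
theorem IsAnchored.overlap (hμ : μ.IsAnchored a) (hT : 2 * μ.pos ≤ T) {k : ℤ} (hk : 0 < k)
    (hkT : k ≤ T) (h : μ.OccursAt T y m) (hshift : μ.OccursAt T y (m + k)) :
    (∀ q, μ.pos < q → q ≤ T - μ.pos → μ.left q = a) ∧ μ.pos < k + 1 ∧ μ.left (k + 1) ≠ a := by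
  have hpos := hμ.pos_pos
  obtain ⟨x, hx, hleft, hyx⟩ := hμ.exists_windowEq h
  have read : ∀ q, μ.pos - T ≤ q → q ≤ μ.pos + T → y (m - μ.pos + q) = x q := by
    intro q hq hq'
    have := hyx (q - μ.pos) ⟨by lia, by lia⟩
    rwa [add_sub_cancel, show m + (q - μ.pos) = m - μ.pos + q by ring] at this
  have block : ∀ q, μ.pos - T + k ≤ q → q ≤ k → x q = a := by
    intro q hq hq'
    rw [← read q (by lia) (by lia)]
    exact hμ.eq_of_occursAt hshift (by lia) (by lia)
  have block_start : 1 < μ.pos - T + k := by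
    by_contra! hle
    exact hx.2 (block 1 hle hk)
  have block_end : x (k + 1) ≠ a := by
    rw [← read (k + 1) (by lia) (by lia)]
    have := hμ.ne_of_occursAt (by lia) hshift
    rwa [show m + k - μ.pos + 1 = m - μ.pos + (k + 1) by ring] at this
  refine ⟨fun q hq hq' => ?_, by lia, ?_⟩
  · rw [← hleft q hq.ne']
    exact block q (by lia) (by lia)
  · rwa [← hleft (k + 1) (by lia)]

theorem IsAnchored.eventually_isolated (hμ : μ.IsAnchored a) : ∀ᶠ T in atTop, μ.Isolated T := by
  have no_overlap : ∀ᶠ T in atTop, ∀ (y : ℤ → A) (m k : ℤ), 0 < k → k ≤ T →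
      μ.OccursAt T y m → ¬ μ.OccursAt T y (m + k) := by
    by_cases hconst : ∀ q, μ.pos < q → μ.left q = a
    · filter_upwards [eventually_ge_atTop (2 * μ.pos)] with T hT y m k hk hkT h hshift
      obtain ⟨-, hlt, hne⟩ := hμ.overlap hT hk hkT h hshift
      exact hne (hconst _ hlt)
    · push Not at hconst
      obtain ⟨q, hq, hqa⟩ := hconst
      filter_upwards [eventually_ge_atTop (2 * μ.pos), eventually_ge_atTop (μ.pos + q)]
        with T hT hqT y m k hk hkT h hshift
      exact hqa ((hμ.overlap hT hk hkT h hshift).1 q hq (by lia))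
  filter_upwards [no_overlap] with T hT y m n hm hn hmn
  obtain ⟨_, _⟩ := abs_le.1 hmn
  obtain hlt | heq | hgt := lt_trichotomy m n
  · exact absurd (by simpa using hn) (hT y m (n - m) (by lia) (by lia) hm)
  · exact heq.symm
  · exact absurd (by simpa using hm) (hT y n (m - n) (by lia) (by lia) hn)

theorem IsAnchored.swapHomeo_mem_anchoredStabilizer [TopologicalSpace A] [DiscreteTopology A]
    (hμ : μ.IsAnchored a) (hT : μ.pos ≤ T) (hiso : μ.Isolated T) :
    μ.swapHomeo hiso ∈ anchoredStabilizer A := by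
  refine ⟨swapHomeo_mem_shiftAut hiso, fun b y => ⟨fun h => ?_, hμ.swap_mem_anchored hT hiso⟩⟩
  rw [← hiso.involutive_swap y]
  exact hμ.swap_mem_anchored hT hiso h

end Marker

/-! ### Correcting finitely many coordinates -/

section Correction

variable {A : Type*} [TopologicalSpace A] [DiscreteTopology A]

theorem exists_correction {a : A} {x w : ℤ → A} (hx : x ∈ anchored a) (hw : w ∈ anchored a)
    (n N : ℤ) :
    ∃ g ∈ anchoredStabilizer A, g x n = w n ∧ (∀ m ≠ n, |m| ≤ N → g x m = x m) ∧
      ∀ b ≠ a, ∀ y ∈ anchored b, ∀ m, |m| ≤ N → g y m = y m := by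
  obtain hn | hn := le_or_gt n 0
  · exact ⟨1, one_mem _, (hx.1 n hn).trans (hw.1 n hn).symm, fun _ _ _ => rfl,
      fun _ _ _ _ _ _ => rfl⟩
  let μ : Marker A := ⟨x, Function.update x n (w n), n, fun k hk => by simp [hk]⟩
  have hμ : μ.IsAnchored a := by
    refine ⟨hx, ⟨fun m hm => ?_, ?_⟩, hn⟩
    · simp [μ, (hm.trans_lt hn).ne, hx.1 m hm]
    · obtain rfl | hne := eq_or_ne n 1
      · simpa [μ] using hw.2
      · simpa [μ, hne.symm] using hx.2
  obtain ⟨T, hiso, hT⟩ := (hμ.eventually_isolated.and (eventually_ge_atTop (n + |N|))).exists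
  have hNT : n + N ≤ T := (add_le_add_right (le_abs_self N) n).trans hT
  have hnT : n ≤ T := (le_add_of_nonneg_right (abs_nonneg N)).trans hT
  have hocc : μ.OccursAt T x n := .inl fun _ _ => rfl
  refine ⟨μ.swapHomeo hiso, hμ.swapHomeo_mem_anchoredStabilizer hnT hiso, ?_, fun m hm hmN => ?_,
    fun b hb y hy m hm => ?_⟩
  · simp [Marker.swap_of_occursAt hocc, μ]
  · exact hiso.swap_eq_of_occursAt hocc hm (abs_le.2 ⟨by grind, by grind⟩)
  · refine Marker.swap_of_not_occursAt fun h => hb ?_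
    exact hμ.eq_of_occursAt_anchored hnT hy h (by grind)

theorem exists_correction_finset {y w : A → ℤ → A} (hy : ∀ a, y a ∈ anchored a)
    (hw : ∀ a, w a ∈ anchored a) (P : Finset (A × ℤ)) :
    ∃ g ∈ anchoredStabilizer A, ∀ p ∈ P, g (y p.1) p.2 = w p.1 p.2 := by
  classical
  induction P using Finset.induction_on with
  | empty => exact ⟨1, one_mem _, by simp⟩
  | insert p P hp ih =>
    obtain ⟨g, hg, hgP⟩ := ih
    obtain ⟨N, hN⟩ := (P.image fun q => |q.2|).exists_le
    have hgy : ∀ b, g (y b) ∈ anchored b := fun b => (hg.2 b _).2 (hy b)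
    obtain ⟨h, hh, h_new, h_same, h_other⟩ := exists_correction (hgy p.1) (hw p.1) p.2 N
    refine ⟨h * g, mul_mem hh hg, Finset.forall_mem_insert _ _ _ |>.2 ⟨h_new, fun q hq => ?_⟩⟩
    have hqN : |q.2| ≤ N := hN _ (Finset.mem_image_of_mem _ hq)
    have h_fixes : h (g (y q.1)) q.2 = g (y q.1) q.2 := by
      obtain hb | hb := eq_or_ne q.1 p.1
      · rw [hb]
        exact h_same _ (fun hn => hp (Prod.ext hb hn ▸ hq)) hqN
      · exact h_other _ hb _ (hgy _) _ hqN
    exact h_fixes.trans (hgP q hq)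

end Correction

theorem gstar_diag_minimal_general (A : Type*) [TopologicalSpace A] [DiscreteTopology A] :
    ∀ z : ProdOmega A,
      Dense {w : ProdOmega A |
        ∃ (g : (ℤ → A) ≃ₜ (ℤ → A)) (hg : g ∈ Gstar A), diagAct A g hg z = w} := by
  intro z w
  choose g hg hgw using exists_correction_finset (fun a => phiMap_mem_anchored (z.2 a))
    (fun a => phiMap_mem_anchored (w.2 a))
  have hgG (P) : g P ∈ Gstar A := anchoredStabilizer_subset_Gstar (hg P)
  refine mem_closure_of_tendsto (f := fun P => diagAct A (g P) (hgG P) z) (b := atTop) ?_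
    (.of_forall fun P => ⟨g P, hgG P, rfl⟩)
  refine tendsto_subtype_rng.2 (tendsto_pi_nhds.2 fun a => tendsto_pi_nhds.2 fun n => ?_)
  refine tendsto_nhds_of_eventually_eq ?_
  filter_upwards [eventually_ge_atTop {(a, (n : ℤ))}] with P hP
  have hgz : g P (phiMap A (z.1 a)) ∈ anchored a :=
    ((hg P).2 a _).2 (phiMap_mem_anchored (z.2 a))
  calc omegaAct A (g P) (z.1 a) n = g P (phiMap A (z.1 a)) n :=
        congrFun (omegaAct_eq_restrict hgz) n
    _ = phiMap A (w.1 a) n := hgw P _ (Finset.singleton_subset_iff.1 hP)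
    _ = w.1 a n := phiMap_natCast _ n

/-- The diagonal action of `G*` on `∏_{a ∈ A} Ω^a` is minimal: every
`G*`-orbit is dense. -/
theorem gstar_diag_minimal
    (A : Type*) [Fintype A] [TopologicalSpace A] [DiscreteTopology A]
    (hA : 2 ≤ Fintype.card A) :
    ∀ z : ProdOmega A,
      Dense {w : ProdOmega A |
        ∃ (g : (ℤ → A) ≃ₜ (ℤ → A)) (hg : g ∈ Gstar A), diagAct A g hg z = w} :=
  gstar_diag_minimal_general A
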